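/- Fix an integer d ≥ 1 and let X be a d-regular tree. Let Y'', Y', Y be finite nonempty trees all of whose vertices have degree at most d, and let i : Y'' → Y' and j : Y' → Y be isometric embeddings. Then for every isometric embedding α : Y'' → X and every isometric embedding γ : Y' → X, the cardinality of { β : Y → X | β isometric embedding, β ∘ (j ∘ i) = α } equals the product of the cardinality of { β : Y → X | β isometric embedding, β ∘ j = γ } with the cardinality of { δ : Y' → X | δ isometric embedding, δ ∘ i = α }. -/

import Mathlib

/-- An isometric embedding of simple graphs: an injective map on vertices preserving
the combinatorial (shortest-path) distance. -/
def IsIsomEmb {A B : Type*} (G : SimpleGraph A) (H : SimpleGraph B) (f : A → B) : Prop :=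
  Function.Injective f ∧ ∀ x y : A, H.dist (f x) (f y) = G.dist x y

/-!
Restricting an extension `β` of `α` to `Y'` sorts the extensions to `Y` by their restriction
`δ = β ∘ j`, so it is enough that every fiber has the size of the fiber over `γ`. This follows from
the homogeneity of the regular tree: two isometric embeddings of the same graph differ by an
isometry of the tree. Such an isometry is a maximal isometric correspondence between subtrees: if
its domain missed a neighbor of one of its vertices, a degree count would give a neighbor of the
image vertex outside its codomain, and in a tree the new pair of vertices is automatically at the
right distance from all the old ones.
-/

open Function Set

section Trees

variable {V : Type*} {G : SimpleGraph V}

theorem length_eq_dist_of_isPath (hG : G.IsAcyclic) {u v : V} {p : G.Walk u v} (hp : p.IsPath) :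
    p.length = G.dist u v := by
  obtain ⟨q, hq, hlen⟩ := p.reachable.exists_path_of_dist
  have hpq : p = q := congrArg Subtype.val ((hG.subsingleton_path u v).elim ⟨p, hp⟩ ⟨q, hq⟩)
  rw [hpq, hlen]

theorem dist_eq_dist_add_one_of_induce_preconnected (hG : G.IsAcyclic) {S : Set V}
    (hS : (G.induce S).Preconnected) {x u v : V} (hx : x ∈ S) (hu : u ∈ S) (hv : v ∉ S)
    (huv : G.Adj u v) : G.dist x v = G.dist x u + 1 := by
  obtain ⟨q, hq, hqS⟩ : ∃ q : G.Walk x u, q.IsPath ∧ ∀ w ∈ q.support, w ∈ S := by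
    obtain ⟨p, hp⟩ := (hS ⟨x, hx⟩ ⟨u, hu⟩).exists_isPath
    refine ⟨p.map (SimpleGraph.Embedding.induce S).toHom, hp.map Subtype.val_injective,
      fun w hw => ?_⟩
    have hsupport := SimpleGraph.Walk.support_map (SimpleGraph.Embedding.induce S).toHom p
    obtain ⟨w', -, rfl⟩ := List.mem_map.1 (hsupport.subst (motive := (w ∈ ·)) hw)
    exact w'.2
  rw [← length_eq_dist_of_isPath hG (hq.concat (mt (hqS v) hv) huv),
    SimpleGraph.Walk.length_concat, length_eq_dist_of_isPath hG hq]

theorem induce_insert_connected {S : Set V} (hS : (G.induce S).Connected) {u v : V} (hu : u ∈ S)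
    (huv : G.Adj u v) : (G.induce (insert v S)).Connected := by
  rw [insert_eq]
  exact SimpleGraph.connected_induce_union
    SimpleGraph.Connected.of_subsingleton.preconnected hS.preconnected (mem_singleton v) hu huv.symm

theorem induce_iUnion_connected_of_total {ι : Type*} [Nonempty ι] {S : ι → Set V}
    (hS_total : ∀ k l, S k ⊆ S l ∨ S l ⊆ S k) (hS : ∀ k, (G.induce (S k)).Connected) :
    (G.induce (⋃ k, S k)).Connected := by
  rw [← sUnion_range]
  refine SimpleGraph.induce_sUnion_connected_of_pairwise_not_disjoint (range_nonempty S) ?_ ?_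
  · rintro _ _ ⟨k, rfl⟩ ⟨l, rfl⟩
    have hne (m : ι) : (S m).Nonempty := nonempty_coe_sort.1 (hS m).nonempty
    obtain hkl | hlk := hS_total k l
    · rw [inter_eq_left.2 hkl]
      exact hne k
    · rw [inter_eq_right.2 hlk]
      exact hne l
  · rintro _ ⟨k, rfl⟩
    exact hS k

end Trees

namespace IsIsomEmb

variable {A B C : Type*} {G : SimpleGraph A} {H : SimpleGraph B} {K : SimpleGraph C}

theorem comp {g : B → C} {f : A → B} (hg : IsIsomEmb H K g) (hf : IsIsomEmb G H f) :
    IsIsomEmb G K (g ∘ f) :=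
  ⟨hg.1.comp hf.1, fun x y => (hg.2 (f x) (f y)).trans (hf.2 x y)⟩

theorem symm {e : A ≃ B} (he : IsIsomEmb G H e) : IsIsomEmb H G e.symm :=
  ⟨e.symm.injective, fun x y => by rw [← he.2, e.apply_symm_apply, e.apply_symm_apply]⟩

theorem equiv_comp_iff {e : B ≃ C} (he : IsIsomEmb H K e) {f : A → B} :
    IsIsomEmb G K (e ∘ f) ↔ IsIsomEmb G H f := by
  refine ⟨fun h => ?_, he.comp⟩
  have hsymm : e.symm ∘ (e ∘ f) = f := by rw [← comp_assoc, e.symm_comp_self, id_comp]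
  exact hsymm ▸ he.symm.comp h

theorem map_adj {f : A → B} (hf : IsIsomEmb G H f) {x y : A} (hxy : G.Adj x y) :
    H.Adj (f x) (f y) := by
  rwa [← SimpleGraph.dist_eq_one_iff_adj, hf.2, SimpleGraph.dist_eq_one_iff_adj]

theorem connected_domain [Nonempty A] {f : A → B} (hf : IsIsomEmb G H f) (hH : H.Connected) :
    G.Connected := by
  refine ⟨fun x y => ?_⟩
  by_contra hxy
  -- The junk value `dist = 0` between components would make `f` identify `x` and `y`.
  have hdist : H.dist (f x) (f y) = 0 := by
    rw [hf.2, SimpleGraph.dist_eq_zero_of_not_reachable hxy]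
  exact hxy (hf.1 (hH.dist_eq_zero_iff.1 hdist) ▸ SimpleGraph.Reachable.refl x)

theorem induce_range_connected {f : A → B} (hf : IsIsomEmb G H f) (hG : G.Connected) :
    (H.induce (range f)).Connected :=
  hG.map (⟨rangeFactorization f, hf.map_adj⟩ : G →g H.induce (range f))
    rangeFactorization_surjective

end IsIsomEmb

/-- A distance-preserving correspondence between connected sets of vertices of `G` and `H`. Partial
isometries are encoded as relations, so that extension is inclusion and the inverse is again a
partial isometry. -/
structure IsPartialIsometry {V W : Type*} (G : SimpleGraph V) (H : SimpleGraph W)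
    (R : SetRel V W) : Prop where
  dist_eq : ∀ {a a' b b'}, (a, b) ∈ R → (a', b') ∈ R → G.dist a a' = H.dist b b'
  dom_connected : (G.induce R.dom).Connected
  cod_connected : (H.induce R.cod).Connected

namespace IsPartialIsometry

variable {V W : Type*} {G : SimpleGraph V} {H : SimpleGraph W} {R : SetRel V W}

theorem inv (hR : IsPartialIsometry G H R) : IsPartialIsometry H G R.inv :=
  ⟨fun h h' => (hR.dist_eq h h').symm, hR.cod_connected, hR.dom_connected⟩

theorem maximal_inv (hR : Maximal (IsPartialIsometry G H) R) :
    Maximal (IsPartialIsometry H G) R.inv :=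
  ⟨hR.prop.inv, fun _ hS hle => SetRel.inv_mono (hR.le_of_ge hS.inv (SetRel.inv_mono hle))⟩

theorem right_unique (hR : IsPartialIsometry G H R) (hH : H.Connected) {a : V} {b b' : W}
    (hb : (a, b) ∈ R) (hb' : (a, b') ∈ R) : b = b' := by
  rw [← hH.dist_eq_zero_iff, ← hR.dist_eq hb hb', SimpleGraph.dist_self]

theorem adj_iff (hR : IsPartialIsometry G H R) {a a' : V} {b b' : W} (hab : (a, b) ∈ R)
    (hab' : (a', b') ∈ R) : G.Adj a a' ↔ H.Adj b b' := by
  rw [← SimpleGraph.dist_eq_one_iff_adj, hR.dist_eq hab hab', SimpleGraph.dist_eq_one_iff_adj]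

theorem of_isIsomEmb {A : Type*} {K : SimpleGraph A} (hK : K.Connected) {f : A → V} {g : A → W}
    (hf : IsIsomEmb K G f) (hg : IsIsomEmb K H g) :
    IsPartialIsometry G H (range fun x => (f x, g x)) where
  dist_eq := by
    rintro _ _ _ _ ⟨x, ⟨⟩⟩ ⟨y, ⟨⟩⟩
    rw [hf.2, hg.2]
  dom_connected := by
    have hdom : SetRel.dom (range fun x => (f x, g x)) = range f := by ext; simp
    exact hdom ▸ hf.induce_range_connected hK
  cod_connected := by
    have hcod : SetRel.cod (range fun x => (f x, g x)) = range g := by ext; simp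
    exact hcod ▸ hg.induce_range_connected hK

theorem sUnion {c : Set (SetRel V W)} (hchain : IsChain (· ⊆ ·) c) (hne : c.Nonempty)
    (hc : ∀ R ∈ c, IsPartialIsometry G H R) : IsPartialIsometry G H (⋃₀ c) := by
  have : Nonempty c := hne.to_subtype
  have htotal (S T : c) : S.1 ⊆ T.1 ∨ T.1 ⊆ S.1 := hchain.total S.2 T.2
  refine ⟨?_, ?_, ?_⟩
  · rintro _ _ _ _ ⟨S, hS, hab⟩ ⟨T, hT, hab'⟩
    obtain hST | hTS := htotal ⟨S, hS⟩ ⟨T, hT⟩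
    · exact (hc T hT).dist_eq (hST hab) hab'
    · exact (hc S hS).dist_eq hab (hTS hab')
  · have hdom : SetRel.dom (⋃₀ c) = ⋃ S : c, SetRel.dom S.1 := by
      ext
      simp only [SetRel.mem_dom, mem_sUnion, mem_iUnion, Subtype.exists]
      grind
    rw [hdom]
    exact induce_iUnion_connected_of_total
      (fun S T => (htotal S T).imp SetRel.dom_mono SetRel.dom_mono)
      fun S => (hc S S.2).dom_connected
  · have hcod : SetRel.cod (⋃₀ c) = ⋃ S : c, SetRel.cod S.1 := by
      ext
      simp only [SetRel.mem_cod, mem_sUnion, mem_iUnion, Subtype.exists]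
      grind
    rw [hcod]
    exact induce_iUnion_connected_of_total
      (fun S T => (htotal S T).imp SetRel.cod_mono SetRel.cod_mono)
      fun S => (hc S S.2).cod_connected

theorem exists_maximal_ge (hR : IsPartialIsometry G H R) :
    ∃ M, R ⊆ M ∧ Maximal (IsPartialIsometry G H) M :=
  zorn_subset_nonempty {S | IsPartialIsometry G H S}
    (fun c hc hchain hne => ⟨⋃₀ c, sUnion hchain hne hc, fun _ => subset_sUnion_of_mem⟩) R hR

theorem insert_of_adj (hR : IsPartialIsometry G H R) (hG : G.IsAcyclic) (hH : H.IsAcyclic)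
    {a a' : V} {b b' : W} (hab : (a, b) ∈ R) (haa' : G.Adj a a') (hbb' : H.Adj b b')
    (ha' : a' ∉ R.dom) (hb' : b' ∉ R.cod) : IsPartialIsometry G H (insert (a', b') R) := by
  have hdist {x : V} {y : W} (hxy : (x, y) ∈ R) : G.dist x a' = H.dist y b' := by
    rw [dist_eq_dist_add_one_of_induce_preconnected hG hR.dom_connected.preconnected ⟨y, hxy⟩
        ⟨b, hab⟩ ha' haa',
      dist_eq_dist_add_one_of_induce_preconnected hH hR.cod_connected.preconnected ⟨x, hxy⟩
        ⟨a, hab⟩ hb' hbb',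
      hR.dist_eq hxy hab]
  refine ⟨?_, ?_, ?_⟩
  · rintro _ _ _ _ (⟨⟨⟩⟩ | hxy) (⟨⟨⟩⟩ | hxy')
    · rw [SimpleGraph.dist_self, SimpleGraph.dist_self]
    · rw [SimpleGraph.dist_comm, hdist hxy', SimpleGraph.dist_comm]
    · exact hdist hxy
    · exact hR.dist_eq hxy hxy'
  · have hdom : SetRel.dom (insert (a', b') R) = insert a' R.dom := by
      ext
      simp only [SetRel.mem_dom, mem_insert_iff, Prod.mk.injEq]
      grind
    exact hdom ▸ induce_insert_connected hR.dom_connected ⟨b, hab⟩ haa'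
  · have hcod : SetRel.cod (insert (a', b') R) = insert b' R.cod := by
      ext
      simp only [SetRel.mem_cod, mem_insert_iff, Prod.mk.injEq]
      grind
    exact hcod ▸ induce_insert_connected hR.cod_connected ⟨a, hab⟩ hbb'

theorem neighborSet_subset_dom [G.LocallyFinite] [H.LocallyFinite] (hR : IsPartialIsometry G H R)
    (hH : H.Connected) {a : V} {b : W} (hab : (a, b) ∈ R) (hdeg : G.degree a ≤ H.degree b)
    (hb : H.neighborSet b ⊆ R.cod) : G.neighborSet a ⊆ R.dom := by
  have : Nonempty V := ⟨a⟩
  choose! f hf using hb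
  have hmaps : MapsTo f (H.neighborFinset b) (G.neighborFinset a) := fun y hy => by
    rw [Finset.mem_coe, SimpleGraph.mem_neighborFinset] at hy ⊢
    exact (hR.adj_iff hab (hf hy)).2 hy
  have hinj : InjOn f (H.neighborFinset b) := fun y hy z hz hyz => by
    rw [Finset.mem_coe, SimpleGraph.mem_neighborFinset] at hy hz
    exact hR.right_unique hH (hf hy) (hyz ▸ hf hz)
  have hsurj : SurjOn f (H.neighborFinset b) (G.neighborFinset a) :=
    Finset.surjOn_of_injOn_of_card_le f hmaps hinj hdeg
  intro x hx
  obtain ⟨y, hy, rfl⟩ := hsurj ((G.mem_neighborFinset a x).2 hx)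
  exact ⟨y, hf ((H.mem_neighborFinset b y).1 hy)⟩

theorem dom_eq_univ_of_maximal [G.LocallyFinite] [H.LocallyFinite] (hG : G.IsTree) (hH : H.IsTree)
    {d : ℕ} (hGd : G.IsRegularOfDegree d) (hHd : H.IsRegularOfDegree d)
    (hR : Maximal (IsPartialIsometry G H) R) : R.dom = univ := by
  by_contra hdom
  obtain ⟨v, hv⟩ := (ne_univ_iff_exists_notMem _).1 hdom
  obtain ⟨u, hu⟩ := nonempty_coe_sort.1 hR.prop.dom_connected.nonempty
  obtain ⟨p⟩ := hG.connected u v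
  obtain ⟨⟨⟨a, a'⟩, haa'⟩, -, ⟨b, hab⟩, ha'⟩ := p.exists_boundary_dart R.dom hu hv
  obtain ⟨b', hbb', hb'⟩ : ∃ b', H.Adj b b' ∧ b' ∉ R.cod := by
    by_contra! hcod
    exact ha' (hR.prop.neighborSet_subset_dom hH.connected hab
      (by rw [hGd.degree_eq, hHd.degree_eq]) hcod haa')
  exact ha' ⟨b', hR.le_of_ge
    (hR.prop.insert_of_adj hG.isAcyclic hH.isAcyclic hab haa' hbb' ha' hb')
    (subset_insert _ _) (mem_insert _ _)⟩

theorem exists_equiv (hR : IsPartialIsometry G H R) (hG : G.Connected) (hH : H.Connected)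
    (hdom : R.dom = univ) (hcod : R.cod = univ) :
    ∃ e : V ≃ W, IsIsomEmb G H e ∧ ∀ {a b}, (a, b) ∈ R → e a = b := by
  choose f hf using eq_univ_iff_forall.1 hdom
  choose g hg using eq_univ_iff_forall.1 hcod
  let e : V ≃ W :=
    { toFun := f
      invFun := g
      left_inv := fun a => hR.inv.right_unique hG (hg (f a)) (hf a)
      right_inv := fun b => hR.right_unique hH (hf (g b)) (hg b) }
  exact ⟨e, ⟨e.injective, fun a a' => (hR.dist_eq (hf a) (hf a')).symm⟩,
    fun hab => hR.right_unique hH (hf _) hab⟩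

end IsPartialIsometry

theorem exists_isometry_comp_eq_of_isRegularOfDegree {A V W : Type*} [Nonempty A]
    {K : SimpleGraph A} {G : SimpleGraph V} {H : SimpleGraph W} [G.LocallyFinite] [H.LocallyFinite]
    (hG : G.IsTree) (hH : H.IsTree) {d : ℕ} (hGd : G.IsRegularOfDegree d)
    (hHd : H.IsRegularOfDegree d) {f : A → V} {g : A → W} (hf : IsIsomEmb K G f)
    (hg : IsIsomEmb K H g) : ∃ e : V ≃ W, IsIsomEmb G H e ∧ e ∘ f = g := by
  obtain ⟨M, hfgM, hM⟩ :=
    (IsPartialIsometry.of_isIsomEmb (hf.connected_domain hG.connected) hf hg).exists_maximal_ge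
  have hdom : M.dom = univ := IsPartialIsometry.dom_eq_univ_of_maximal hG hH hGd hHd hM
  have hcod : M.cod = univ := IsPartialIsometry.dom_eq_univ_of_maximal hH hG hHd hGd
    (IsPartialIsometry.maximal_inv hM)
  obtain ⟨e, he, heM⟩ := hM.prop.exists_equiv hG.connected hH.connected hdom hcod
  exact ⟨e, he, funext fun x => heM (hfgM ⟨x, rfl⟩)⟩

/-- The isometric embeddings of `Y` extending `γ` along `j`. In a regular tree `X` their number is
the paper's `[Y : Y']_j`. -/
def isomExtensions {A B W : Type*} (Y : SimpleGraph B) (X : SimpleGraph W) (j : A → B)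
    (γ : A → W) : Set (B → W) :=
  {β | IsIsomEmb Y X β ∧ β ∘ j = γ}

section Extensions

variable {A B C V W : Type*} {Y : SimpleGraph B} {X : SimpleGraph W}

/-- Postcomposition with an isometry carries the extensions of `γ` to those of `e ∘ γ`, so that
their number depends on `γ` only up to isometry. -/
def isomExtensionsCongr {X' : SimpleGraph V} {e : W ≃ V} (he : IsIsomEmb X X' e) (j : A → B)
    (γ : A → W) : isomExtensions Y X j γ ≃ isomExtensions Y X' j (e ∘ γ) :=
  (Equiv.arrowCongr (Equiv.refl B) e).subtypeEquiv fun _ =>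
    and_congr he.equiv_comp_iff.symm e.injective.comp_left.eq_iff.symm

/-- Extensions along `j ∘ i`, sorted by their restriction along `j`: the bijective form of the
multiplicativity, before the fibers are identified with each other. -/
def isomExtensionsCompEquiv {Y' : SimpleGraph A} {j : A → B} (hj : IsIsomEmb Y' Y j) (i : C → A)
    (α : C → W) :
    isomExtensions Y X (j ∘ i) α ≃ Σ δ : isomExtensions Y' X i α, isomExtensions Y X j δ where
  toFun β := ⟨⟨β.1 ∘ j, β.2.1.comp hj, β.2.2⟩, ⟨β.1, β.2.1, rfl⟩⟩
  invFun p := ⟨p.2.1, p.2.2.1, by rw [← comp_assoc, p.2.2.2]; exact p.1.2.2⟩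
  left_inv _ := rfl
  right_inv := by
    rintro ⟨⟨δ, hδ⟩, ⟨β, hβ, hβδ⟩⟩
    obtain rfl : β ∘ j = δ := hβδ
    rfl

end Extensions

theorem stmt_6_general {A B C W : Type*} (X : SimpleGraph W) (hX : X.IsTree) [X.LocallyFinite]
    {d : ℕ} (hXd : X.IsRegularOfDegree d) (Y : SimpleGraph B) [Nonempty A] (Y' : SimpleGraph A)
    (i : C → A) (j : A → B) (hj : IsIsomEmb Y' Y j) (α : C → W) (γ : A → W)
    (hγ : IsIsomEmb Y' X γ) :
    Nonempty ({β : B → W | IsIsomEmb Y X β ∧ β ∘ (j ∘ i) = α} ≃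
      {β : B → W | IsIsomEmb Y X β ∧ β ∘ j = γ} ×
        {δ : A → W | IsIsomEmb Y' X δ ∧ δ ∘ i = α}) := by
  have hfiber (δ : isomExtensions Y' X i α) :
      Nonempty (isomExtensions Y X j δ ≃ isomExtensions Y X j γ) := by
    obtain ⟨e, he, rfl⟩ := exists_isometry_comp_eq_of_isRegularOfDegree hX hX hXd hXd δ.2.1 hγ
    exact ⟨isomExtensionsCongr he j δ⟩
  exact ⟨(isomExtensionsCompEquiv hj i α).trans <|
    (Equiv.sigmaCongrRight fun δ => (hfiber δ).some).trans <|
    (Equiv.sigmaEquivProd _ _).trans (Equiv.prodComm _ _)⟩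

/-- Multiplicativity of the extension counts `[Y : Y'']_{j∘i} = [Y : Y']_j ⬝ [Y' : Y'']_i`
for isometric embeddings of bounded-degree finite trees into a `d`-regular tree. -/
theorem stmt_6 {W VY VY' VY'' : Type*} (d : ℕ) (hd : 1 ≤ d)
    (X : SimpleGraph W) (hXtree : X.IsTree) [X.LocallyFinite]
    (hXreg : X.IsRegularOfDegree d)
    [Fintype VY] [Nonempty VY] (Y : SimpleGraph VY) (hYtree : Y.IsTree)
    [Y.LocallyFinite] (hYdeg : ∀ v : VY, Y.degree v ≤ d)
    [Fintype VY'] [Nonempty VY'] (Y' : SimpleGraph VY') (hY'tree : Y'.IsTree)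
    [Y'.LocallyFinite] (hY'deg : ∀ v : VY', Y'.degree v ≤ d)
    [Fintype VY''] [Nonempty VY''] (Y'' : SimpleGraph VY'') (hY''tree : Y''.IsTree)
    [Y''.LocallyFinite] (hY''deg : ∀ v : VY'', Y''.degree v ≤ d)
    (i : VY'' → VY') (hi : IsIsomEmb Y'' Y' i)
    (j : VY' → VY) (hj : IsIsomEmb Y' Y j)
    (α : VY'' → W) (hα : IsIsomEmb Y'' X α)
    (γ : VY' → W) (hγ : IsIsomEmb Y' X γ) :
    {β : VY → W | IsIsomEmb Y X β ∧ β ∘ (j ∘ i) = α}.ncard =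
      {β : VY → W | IsIsomEmb Y X β ∧ β ∘ j = γ}.ncard *
      {δ : VY' → W | IsIsomEmb Y' X δ ∧ δ ∘ i = α}.ncard := by
  obtain ⟨e⟩ := stmt_6_general X hXtree hXreg Y Y' i j hj α γ hγ
  simpa only [Nat.card_prod, Nat.card_coe_set_eq] using Nat.card_congr e
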